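/- (Triangle counting.) Let H' ≤ H ≤ G = 𝔽₂ⁿ be subgroups, g₁, g₂, g₃ ∈ G with g₁+g₂+g₃ = 0, and z₁ ∈ H. For any sets A, B, C ⊆ G, the number of triples (a,b,c) with a ∈ A ∩ (H'+g₁+z₁), b ∈ B ∩ (H+g₂), c ∈ C ∩ (H+g₃), and a+b+c = 0, equals |H|·|H'|·∑_{α,η} Â_{H'}^{g₁+z₁}(α)·B̂_H^{g₂}(α+η)·Ĉ_H^{g₃}(α+η)·(-1)^{⟨α+η, z₁⟩}, where α ranges over characters of H' (i.e. representatives η ∈ 𝔽₂ⁿ of distinct restrictions of ⟨·,α⟩ to H') and η ranges over characters of H that are trivial on H'. -/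

import Mathlib

open scoped Classical BigOperators

noncomputable section

/-- The group `G = 𝔽₂ⁿ`. -/
abbrev G (n : ℕ) : Type := Fin n → ZMod 2

/-- The coset `H + g` (note that `-g = g` in `𝔽₂ⁿ`). -/
def coset {n : ℕ} (H : AddSubgroup (G n)) (g : G n) : Set (G n) := {x | x + g ∈ H}

/-- The entropy function `f(x) = x log x` (with `f 0 = 0`). -/
def ent (x : ℝ) : ℝ := x * Real.log x

/-- The density of `A` on the coset `H + g`. -/
def dens {n : ℕ} (A : Set (G n)) (H : AddSubgroup (G n)) (g : G n) : ℝ :=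
  (Nat.card ↥(A ∩ coset H g) : ℝ) / (Nat.card ↥H : ℝ)

/-- Mean entropy `F_A(G, H)` of partitioning `G` into cosets of `H`. -/
def meanEntG {n : ℕ} (A : Set (G n)) (H : AddSubgroup (G n)) : ℝ :=
  (∑ g : G n, ent (dens A H g)) / (Fintype.card (G n) : ℝ)

/-- Mean entropy `F_A(H + g, H')` of partitioning the coset `H + g` into cosets of `H'`. -/
def meanEntCoset {n : ℕ} (A : Set (G n)) (H H' : AddSubgroup (G n)) (g : G n) : ℝ :=
  (∑ g₁ : ↥H, ent (dens A H' (g + ↑g₁))) / (Nat.card ↥H : ℝ)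

/-- The standard bilinear form on `𝔽₂ⁿ`. -/
def dotp {n : ℕ} (x y : G n) : ZMod 2 := ∑ i, x i * y i

/-- The character value `(-1)^{⟨x, y⟩}`. -/
def chi {n : ℕ} (x y : G n) : ℝ := if dotp x y = 0 then 1 else -1

/-- Fourier coefficient `f̂_H^g(η) = E_{x ∈ H} [f(x + g) · (-1)^{⟨x, η⟩}]`. -/
def fCoeff {n : ℕ} (H : AddSubgroup (G n)) (g : G n) (f : G n → ℝ) (η : G n) : ℝ :=
  (∑ x : ↥H, f (↑x + g) * chi ↑x η) / (Nat.card ↥H : ℝ)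

/-- `f` is `ρ`-superregular on `H + g`: every Fourier coefficient at a character that is
nontrivial on `H` is at most `ρ` times the zeroth coefficient in absolute value. -/
def SuperregularOn {n : ℕ} (H : AddSubgroup (G n)) (g : G n) (ρ : ℝ) (f : G n → ℝ) : Prop :=
  ∀ η : G n, (∃ x ∈ H, dotp x η ≠ 0) →
    |fCoeff H g f η| ≤ ρ * fCoeff H g f 0

/-- `H'` `(α, β, k)`-shatters `A` on `H + g`. -/
def Shatters {n : ℕ} (H' H : AddSubgroup (G n)) (A : Set (G n)) (g : G n)
    (α β k : ℝ) : Prop :=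
  (Nat.card ↥H : ℝ) / (Nat.card ↥H' : ℝ) ≤ (2 : ℝ) ^ k ∧
  α ≤ (Nat.card {g' : ↥H //
        (Nat.card ↥(A ∩ coset H' (g + ↑g')) : ℝ) ≤ β * dens A H g * (Nat.card ↥H' : ℝ)} : ℝ) /
      (Nat.card ↥H : ℝ)

/-- Number of triangles `(a, b, c)`, `a + b + c = 0`, with `a ∈ S₁`, `b ∈ S₂`, `c ∈ S₃`. -/
def triBetween {n : ℕ} (S₁ S₂ S₃ : Set (G n)) : ℕ :=
  Nat.card {p : G n × G n × G n // p.1 ∈ S₁ ∧ p.2.1 ∈ S₂ ∧ p.2.2 ∈ S₃ ∧ p.1 + p.2.1 + p.2.2 = 0}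

/-- Number of triangles in `A`. -/
def triCount {n : ℕ} (A : Set (G n)) : ℕ := triBetween A A A

/-- The annihilator of `K`: characters trivial on `K`. -/
def ann {n : ℕ} (K : AddSubgroup (G n)) : AddSubgroup (G n) where
  carrier := {η | ∀ x ∈ K, dotp x η = 0}
  zero_mem' := by intro x _; simp [dotp]
  add_mem' := by
    intro a b ha hb x hx
    have h : dotp x (a + b) = dotp x a + dotp x b := by
      simp [dotp, mul_add, Finset.sum_add_distrib]
    rw [h, ha x hx, hb x hx, add_zero]
  neg_mem' := by
    intro a ha x hx
    have h : dotp x (-a) = -dotp x a := by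
      simp [dotp]
    rw [h, ha x hx, neg_zero]

/-- Average of `f` over the coset `v + H'`. -/
def fbar {n : ℕ} (H' : AddSubgroup (G n)) (f : G n → ℝ) (v : G n) : ℝ :=
  (∑ y : ↥H', f (v + ↑y)) / (Nat.card ↥H' : ℝ)

/-- Tower function: `tower 0 = 1`, `tower (i+1) = 2 ^ tower i`. -/
def tower : ℕ → ℕ
  | 0 => 1
  | k + 1 => 2 ^ tower k

/-- `A` is `ε`-far from triangle-free: at least `ε N` elements must be removed from `A`
to destroy all triangles. -/
def FarFromTriangleFree {n : ℕ} (A : Set (G n)) (ε : ℝ) : Prop :=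
  ∀ B ⊆ A, (∀ x ∈ B, ∀ y ∈ B, ∀ z ∈ B, x + y + z ≠ 0) →
    ε * 2 ^ n ≤ (Nat.card ↥(A \ B) : ℝ)

/-- The set of elements of a triangle. -/
def elems {n : ℕ} (p : G n × G n × G n) : Set (G n) := {p.1, p.2.1, p.2.2}

def ftS {n : ℕ} (S : Set (G n)) (η : G n) : ℝ :=
  ∑ a : G n, (if a ∈ S then (1 : ℝ) else 0) * chi a η

theorem dotp_add_left' {n : ℕ} (x y z : G n) : dotp (x + y) z = dotp x z + dotp y z := by
  simp [dotp, add_mul, Finset.sum_add_distrib]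

theorem dotp_comm' {n : ℕ} (x y : G n) : dotp x y = dotp y x := by
  simp [dotp, mul_comm]

theorem chi_comm' {n : ℕ} (x y : G n) : chi x y = chi y x := by
  simp [chi, dotp_comm' x y]

theorem chi_add_left' {n : ℕ} (x y z : G n) : chi (x + y) z = chi x z * chi y z := by
  unfold chi
  rw [dotp_add_left']
  generalize dotp x z = a
  generalize dotp y z = b
  have hh : ∀ a : ZMod 2, a = 0 ∨ a = 1 := by decide
  have h10 : (1 : ZMod 2) ≠ 0 := one_ne_zero
  have h11 : (1 : ZMod 2) + 1 = 0 := CharTwo.add_self_eq_zero 1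
  rcases hh a with rfl | rfl <;> rcases hh b with rfl | rfl <;> simp [h10, h11]

theorem chi_add_right' {n : ℕ} (x y z : G n) : chi z (x + y) = chi z x * chi z y := by
  rw [chi_comm', chi_add_left', chi_comm' x, chi_comm' y]

theorem chi_self' {n : ℕ} (x y : G n) : chi x y * chi x y = 1 := by
  unfold chi; split_ifs <;> norm_num

theorem g_add_self {n : ℕ} (x : G n) : x + x = 0 := by
  funext i; exact CharTwo.add_self_eq_zero (x i)

theorem chi_zero' {n : ℕ} (x : G n) : chi 0 x = 1 := by simp [chi, dotp]

theorem sum_chi_sub {n : ℕ} (H : AddSubgroup (G n)) (α : G n) :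
    ∑ x : ↥H, chi (x : G n) α = if α ∈ ann H then (Nat.card ↥H : ℝ) else 0 := by
  split_ifs with h
  · have : ∀ x : ↥H, chi (x : G n) α = 1 := fun x => by
      have := h x.1 x.2
      simp [chi, this]
    simp [this]
  · have : ∃ x ∈ H, dotp x α ≠ 0 := by
      by_contra hc
      push Not at hc
      exact h hc
    obtain ⟨y, hy, hne⟩ := this
    have h1 := Equiv.sum_comp (Equiv.addRight (⟨y, hy⟩ : ↥H)) (fun x : ↥H => chi (x : G n) α)
    simp only [Equiv.coe_addRight, AddSubgroup.coe_add, chi_add_left'] at h1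
    have h2 : chi y α = -1 := by simp [chi, hne]
    rw [h2, ← Finset.sum_mul] at h1
    linarith

theorem sum_chi_all {n : ℕ} (x : G n) :
    ∑ α : G n, chi x α = if x = 0 then (Fintype.card (G n) : ℝ) else 0 := by
  split_ifs with h
  · simp only [h, chi_zero', Finset.sum_const, Finset.card_univ, nsmul_eq_mul, mul_one]
  · obtain ⟨i, hi⟩ : ∃ i, x i ≠ 0 := by
      by_contra hc
      push Not at hc
      exact h (funext hc)
    have h1 := Equiv.sum_comp (Equiv.addRight (Pi.single i 1 : G n)) (fun α => chi x α)
    simp only [Equiv.coe_addRight, chi_add_right'] at h1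
    have h2 : chi x (Pi.single i 1) = -1 := by
      have : dotp x (Pi.single i 1) = x i := by simp [dotp, Pi.single_apply]
      simp [chi, this, hi]
    rw [h2, ← Finset.sum_mul] at h1
    linarith

theorem card_mul_ann {n : ℕ} (H : AddSubgroup (G n)) :
    (Nat.card ↥H : ℝ) * (Nat.card ↥(ann H) : ℝ) = Fintype.card (G n) := by
  have h : ∑ α : G n, ∑ x : ↥H, chi (x : G n) α = ∑ x : ↥H, ∑ α : G n, chi (x : G n) α :=
    Finset.sum_comm
  simp only [sum_chi_sub, sum_chi_all] at h
  have h2 : ∑ x : ↥H, (if (x : G n) = 0 then (Fintype.card (G n) : ℝ) else 0)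
      = Fintype.card (G n) := by
    rw [Finset.sum_eq_single (0 : ↥H)]
    · rw [if_pos]; rfl
    · intro b _ hb
      rw [if_neg]
      exact fun hc => hb (Subtype.ext hc)
    · simp
  rw [h2] at h
  rw [← h, ← Finset.sum_filter, Finset.sum_const, nsmul_eq_mul, mul_comm,
    Nat.card_eq_fintype_card (α := ↥(ann H)), Fintype.card_subtype]

theorem fCoeff_eq {n : ℕ} (H : AddSubgroup (G n)) (g : G n) (A : Set (G n)) (η : G n) :
    fCoeff H g (Set.indicator A 1) η =
      chi g η * ftS (A ∩ coset H g) η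
        / (Nat.card ↥H : ℝ) := by
  unfold fCoeff ftS
  congr 1
  rw [← Equiv.sum_comp (Equiv.addRight g), Finset.mul_sum]
  have h1 : ∑ x : ↥H, Set.indicator A (1 : G n → ℝ) (↑x + g) * chi ↑x η
      = ∑ x ∈ Finset.univ.filter (fun x : G n => x ∈ H),
        Set.indicator A (1 : G n → ℝ) (x + g) * chi x η :=
    (Finset.sum_subtype (Finset.univ.filter (fun x : G n => x ∈ H)) (by simp)
      (fun x => Set.indicator A (1 : G n → ℝ) (x + g) * chi x η)).symm
  rw [h1, Finset.sum_filter]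
  refine Finset.sum_congr rfl fun x _ => ?_
  have h3 : x + g + g = x := by rw [add_assoc, g_add_self, add_zero]
  have h4 := chi_self' g η
  simp only [Equiv.coe_addRight, chi_add_left', Set.mem_inter_iff, coset, Set.mem_ofPred_eq, h3,
    Set.indicator_apply, Pi.one_apply]
  by_cases hx : x ∈ H <;> by_cases hA : x + g ∈ A <;> simp [hx, hA]
  linear_combination (-chi x η) * h4

theorem triBetween_eq {n : ℕ} (S T U : Set (G n)) :
    (triBetween S T U : ℝ) = ∑ a : G n, ∑ b : G n, ∑ c : G n,
      (if a ∈ S then (1 : ℝ) else 0) * (if b ∈ T then (1 : ℝ) else 0) *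
        (if c ∈ U then (1 : ℝ) else 0) * (if a + b + c = 0 then 1 else 0) := by
  unfold triBetween
  rw [Nat.card_eq_fintype_card, Fintype.card_subtype, Finset.card_filter]
  push_cast
  rw [Fintype.sum_prod_type]
  refine Finset.sum_congr rfl fun a _ => ?_
  rw [Fintype.sum_prod_type]
  refine Finset.sum_congr rfl fun b _ => Finset.sum_congr rfl fun c _ => ?_
  by_cases h1 : a ∈ S <;> by_cases h2 : b ∈ T <;> by_cases h3 : c ∈ U <;> simp [h1, h2, h3]

theorem tri_fourier {n : ℕ} (S T U : Set (G n)) :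
    ∑ α : G n, ftS S α *
      ftS T α *
      ftS U α
      = Fintype.card (G n) * (triBetween S T U : ℝ) := by
  rw [triBetween_eq]
  have h : ∀ α : G n, ftS S α *
      ftS T α *
      ftS U α
      = ∑ a : G n, ∑ b : G n, ∑ c : G n,
      (if a ∈ S then (1 : ℝ) else 0) * (if b ∈ T then (1 : ℝ) else 0) *
        (if c ∈ U then (1 : ℝ) else 0) * chi (a + b + c) α := by
    intro α
    unfold ftS
    rw [Finset.sum_mul_sum, Finset.sum_mul]
    refine Finset.sum_congr rfl fun a _ => ?_
    rw [Finset.sum_mul_sum]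
    refine Finset.sum_congr rfl fun b _ => Finset.sum_congr rfl fun c _ => ?_
    rw [chi_add_left', chi_add_left']
    ring
  simp only [h]
  rw [Finset.sum_comm, Finset.mul_sum]
  refine Finset.sum_congr rfl fun a _ => ?_
  rw [Finset.sum_comm, Finset.mul_sum]
  refine Finset.sum_congr rfl fun b _ => ?_
  rw [Finset.sum_comm, Finset.mul_sum]
  refine Finset.sum_congr rfl fun c _ => ?_
  rw [← Finset.mul_sum, sum_chi_all]
  split_ifs <;> simp

theorem fCoeff_add_ann {n : ℕ} (H : AddSubgroup (G n)) (g : G n) (f : G n → ℝ) (α η : G n)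
    (h : η ∈ ann H) : fCoeff H g f (α + η) = fCoeff H g f α := by
  unfold fCoeff
  congr 1
  refine Finset.sum_congr rfl fun x _ => ?_
  have h1 : chi (x : G n) η = 1 := by
    have := h x.1 x.2
    simp [chi, this]
  rw [chi_add_right', h1, mul_one]

theorem triangle_counting {n : ℕ} (H' H : AddSubgroup (G n)) (hle : H' ≤ H)
    (g₁ g₂ g₃ : G n) (hg : g₁ + g₂ + g₃ = 0) (z₁ : G n) (hz : z₁ ∈ H)
    (A B C : Set (G n)) :
    (triBetween (A ∩ coset H' (g₁ + z₁)) (B ∩ coset H g₂) (C ∩ coset H g₃) : ℝ)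
      = (Nat.card ↥H : ℝ) * (Nat.card ↥H' : ℝ)
          / ((Nat.card ↥(ann H') : ℝ) * (Nat.card ↥(ann H) : ℝ)) *
        ∑ α : G n, ∑ η : ↥(ann H'),
          fCoeff H' (g₁ + z₁) (Set.indicator A 1) α *
          fCoeff H g₂ (Set.indicator B 1) (α + (η : G n)) *
          fCoeff H g₃ (Set.indicator C 1) (α + (η : G n)) *
          chi (α + (η : G n)) z₁ := by
  have hsum : ∑ α : G n, ∑ η : ↥(ann H'),
          fCoeff H' (g₁ + z₁) (Set.indicator A 1) α *
          fCoeff H g₂ (Set.indicator B 1) (α + (η : G n)) *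
          fCoeff H g₃ (Set.indicator C 1) (α + (η : G n)) *
          chi (α + (η : G n)) z₁
      = (Nat.card ↥(ann H') : ℝ) * ∑ α : G n,
          fCoeff H' (g₁ + z₁) (Set.indicator A 1) α *
          fCoeff H g₂ (Set.indicator B 1) α *
          fCoeff H g₃ (Set.indicator C 1) α * chi α z₁ := by
    rw [Finset.sum_comm]
    have : ∀ η : ↥(ann H'), ∑ α : G n,
          fCoeff H' (g₁ + z₁) (Set.indicator A 1) α *
          fCoeff H g₂ (Set.indicator B 1) (α + (η : G n)) *
          fCoeff H g₃ (Set.indicator C 1) (α + (η : G n)) *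
          chi (α + (η : G n)) z₁ = ∑ α : G n,
          fCoeff H' (g₁ + z₁) (Set.indicator A 1) α *
          fCoeff H g₂ (Set.indicator B 1) α *
          fCoeff H g₃ (Set.indicator C 1) α * chi α z₁ := by
      intro η
      rw [← Equiv.sum_comp (Equiv.addRight (η : G n)) (fun α =>
          fCoeff H' (g₁ + z₁) (Set.indicator A 1) α *
          fCoeff H g₂ (Set.indicator B 1) α *
          fCoeff H g₃ (Set.indicator C 1) α * chi α z₁)]
      refine Finset.sum_congr rfl fun α _ => ?_
      simp only [Equiv.coe_addRight]
      rw [fCoeff_add_ann H' _ _ α η η.2]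
    rw [Finset.sum_congr rfl fun η _ => this η, Finset.sum_const, nsmul_eq_mul,
      Finset.card_univ, Nat.card_eq_fintype_card]
  have hmain : ∑ α : G n,
          fCoeff H' (g₁ + z₁) (Set.indicator A 1) α *
          fCoeff H g₂ (Set.indicator B 1) α *
          fCoeff H g₃ (Set.indicator C 1) α * chi α z₁
      = (Fintype.card (G n) *
          (triBetween (A ∩ coset H' (g₁ + z₁)) (B ∩ coset H g₂) (C ∩ coset H g₃) : ℝ))
        / ((Nat.card ↥H' : ℝ) * (Nat.card ↥H : ℝ) * (Nat.card ↥H : ℝ)) := by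
    rw [← tri_fourier, Finset.sum_div]
    refine Finset.sum_congr rfl fun α _ => ?_
    rw [fCoeff_eq, fCoeff_eq, fCoeff_eq, chi_comm' α z₁, chi_add_left']
    have h1 : chi g₁ α * chi g₂ α * chi g₃ α = 1 := by
      rw [← chi_add_left', ← chi_add_left', hg, chi_zero']
    have h2 := chi_self' z₁ α
    generalize ftS (A ∩ coset H' (g₁ + z₁)) α = X
    generalize ftS (B ∩ coset H g₂) α = Y
    generalize ftS (C ∩ coset H g₃) α = Z
    calc _ = (chi g₁ α * chi g₂ α * chi g₃ α) * (chi z₁ α * chi z₁ α) * (X * Y * Z)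
        / ((Nat.card ↥H' : ℝ) * (Nat.card ↥H : ℝ) * (Nat.card ↥H : ℝ)) := by
          simp only [div_eq_mul_inv, mul_inv]; ring
      _ = _ := by rw [h1, h2, one_mul, one_mul]
  rw [hsum, hmain, ← card_mul_ann H]
  have e1 : (Nat.card ↥H : ℝ) ≠ 0 := Nat.cast_ne_zero.mpr Nat.card_pos.ne'
  have e2 : (Nat.card ↥H' : ℝ) ≠ 0 := Nat.cast_ne_zero.mpr Nat.card_pos.ne'
  have e3 : (Nat.card ↥(ann H) : ℝ) ≠ 0 := Nat.cast_ne_zero.mpr Nat.card_pos.ne'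
  have e4 : (Nat.card ↥(ann H') : ℝ) ≠ 0 := Nat.cast_ne_zero.mpr Nat.card_pos.ne'
  field_simp
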